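/- arXiv:2508.15153 — 2 statements merged into one kernel-verified Lean document; each statement's English description precedes it below -/
import Mathlib

section
/- Fix an integer m ≥ 1 and for natural numbers u, v ≥ 1 let C_{u,v}(m) denote the number of semi-mixed support pairs (I_u, I_v) in ℤ/mℤ with |I_u| = u and |I_v| = v. Then for all u ≥ 2 and v ≥ 2, C_{u,v}(m) = C_{u+1,v−1}(m). -/
/-- The arc `{i, i+1, …, i+ℓ}` in `ℤ/mℤ`. -/
def Arc (m : ℕ) (i : ZMod m) (ℓ : ℕ) : Finset (ZMod m) :=
  (Finset.range (ℓ + 1)).image fun t : ℕ => i + (t : ZMod m)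

/-- A pair `(I_u, I_v)` of nonempty subsets of `ℤ/mℤ` is a semi-mixed support pair if
there are `i ∈ ℤ/mℤ` and `0 ≤ ℓ ≤ m−1` with `I_u ⊆ Arc(i,ℓ)` and
`I_v ∩ Arc(i,ℓ−1) = ∅` (where `Arc(i,ℓ−1)` is the empty set if `ℓ = 0`). -/
def IsSemiMixedPair (m : ℕ) (Iu Iv : Finset (ZMod m)) : Prop :=
  Iu.Nonempty ∧ Iv.Nonempty ∧
    ∃ (i : ZMod m) (ℓ : ℕ), ℓ ≤ m - 1 ∧ Iu ⊆ Arc m i ℓ ∧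
      Iv ∩ (if ℓ = 0 then (∅ : Finset (ZMod m)) else Arc m i (ℓ - 1)) = ∅

/-- `C_{u,v}(m)`: the number of semi-mixed support pairs `(I_u, I_v)` in `ℤ/mℤ`
with `|I_u| = u` and `|I_v| = v`. -/
noncomputable def semiMixedCount (m u v : ℕ) : ℕ :=
  Set.ncard {p : Finset (ZMod m) × Finset (ZMod m) |
    IsSemiMixedPair m p.1 p.2 ∧ p.1.card = u ∧ p.2.card = v}

lemma mem_Arc_iff {m : ℕ} [NeZero m] (i x : ZMod m) (l : ℕ) (hl : l < m) :
    x ∈ Arc m i l ↔ (x - i).val ≤ l := by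
  unfold Arc
  simp only [Finset.mem_image, Finset.mem_range]
  constructor
  · rintro ⟨t, ht, rfl⟩
    rw [add_sub_cancel_left, ZMod.val_natCast_of_lt (by omega)]
    omega
  · intro h
    refine ⟨(x - i).val, by omega, ?_⟩
    rw [ZMod.natCast_zmod_val]
    ring

lemma val_sub_shift {m : ℕ} [NeZero m] (i p x : ZMod m) (h : (p - i).val ≤ (x - i).val) :
    (x - p).val = (x - i).val - (p - i).val := by
  rw [← ZMod.val_sub h]
  congr 1
  ring

lemma semi_iff {m : ℕ} [NeZero m] (Iu Iv : Finset (ZMod m)) :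
    IsSemiMixedPair m Iu Iv ↔ Iv.Nonempty ∧ ∃ p ∈ Iu, ∀ x ∈ Iu, ∀ y ∈ Iv,
      (x - p).val ≤ (y - p).val := by
  have hm : 0 < m := Nat.pos_of_ne_zero (NeZero.ne m)
  constructor
  · rintro ⟨hu, hv, i, l, hl, h1, h2⟩
    refine ⟨hv, ?_⟩
    obtain ⟨p, hp, hmin⟩ := Finset.exists_min_image Iu (fun x => (x - i).val) hu
    refine ⟨p, hp, fun x hx y hy => ?_⟩
    have hxl := (mem_Arc_iff i x l (by omega)).1 (h1 hx)
    have hyl : l ≤ (y - i).val := by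
      by_contra hc
      have hl0 : l ≠ 0 := by omega
      rw [if_neg hl0] at h2
      have : y ∈ Iv ∩ Arc m i (l - 1) :=
        Finset.mem_inter.2 ⟨hy, (mem_Arc_iff i y (l - 1) (by omega)).2 (by omega)⟩
      rw [h2] at this
      simp at this
    have := hmin x hx
    rw [val_sub_shift i p x this, val_sub_shift i p y (by omega)]
    omega
  · rintro ⟨hv, p, hp, h⟩
    refine ⟨⟨p, hp⟩, hv, p, ?_⟩
    obtain ⟨q, hq, hmax⟩ := Finset.exists_max_image Iu (fun x => (x - p).val) ⟨p, hp⟩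
    have hlt := ZMod.val_lt (q - p)
    refine ⟨(q - p).val, by omega, fun x hx => (mem_Arc_iff p x _ hlt).2 (hmax x hx), ?_⟩
    split_ifs with h0
    · simp
    · ext y
      simp only [Finset.mem_inter, Finset.notMem_empty, iff_false]
      rintro ⟨hy, hy2⟩
      rw [mem_Arc_iff p y _ (by omega)] at hy2
      have := h q hq y hy
      omega

/-- Normalised pairs: the first point of the first set is `0`. -/
def normPairs (m u v : ℕ) : Set (Finset (ZMod m) × Finset (ZMod m)) :=
  {p | 0 ∈ p.1 ∧ (∀ x ∈ p.1, ∀ y ∈ p.2, x.val ≤ y.val) ∧ p.1.card = u ∧ p.2.card = v}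

/-- Subsets of `{0, …, m}` containing `0`, of size `n`. -/
def baseSets (m n : ℕ) : Set (Finset ℕ) :=
  {S | 0 ∈ S ∧ S ⊆ Finset.range (m + 1) ∧ S.card = n}

lemma count_eq_prod (m u v : ℕ) [NeZero m] (hv : 1 ≤ v) :
    semiMixedCount m u v = ((Set.univ : Set (ZMod m)) ×ˢ normPairs m u v).ncard := by
  unfold semiMixedCount
  let f : ZMod m × (Finset (ZMod m) × Finset (ZMod m)) → Finset (ZMod m) × Finset (ZMod m) :=
    fun q => (q.2.1.map (Equiv.addLeft q.1).toEmbedding, q.2.2.map (Equiv.addLeft q.1).toEmbedding)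
  have hinj : Set.InjOn f ((Set.univ : Set (ZMod m)) ×ˢ normPairs m u v) := by
    rintro ⟨p, A, B⟩ ⟨-, h0, hle, hA, hB⟩ ⟨q, C, D⟩ ⟨-, h0', hle', hC, hD⟩ heq
    simp only at h0 hle hA hB h0' hle' hC hD
    simp only [f, Prod.mk.injEq] at heq
    obtain ⟨e1, e2⟩ := heq
    have hpq : p = q := by
      have hne : B.Nonempty := Finset.card_pos.1 (by omega)
      obtain ⟨b, hb⟩ := hne
      have m1 : p + b ∈ D.map (Equiv.addLeft q).toEmbedding := by
        rw [← e2]; simp [hb]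
      have m2 : p ∈ C.map (Equiv.addLeft q).toEmbedding := by
        rw [← e1]; simp [h0]
      have m3 : q ∈ A.map (Equiv.addLeft p).toEmbedding := by
        rw [e1]; simp [h0']
      simp only [Finset.mem_map, Equiv.coe_toEmbedding, Equiv.coe_addLeft] at m1 m2 m3
      obtain ⟨d, hd, hd'⟩ := m1
      obtain ⟨c, hc, hc'⟩ := m2
      obtain ⟨a, ha, ha'⟩ := m3
      have k1 := hle a ha b hb
      have k2 := hle' c hc d hd
      have s1 := ZMod.val_sub k1
      have s2 := ZMod.val_sub k2
      have r1 : b - a = d := by linear_combination (-1 : ZMod m) * ha' - hd'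
      have r2 : d - c = b := by linear_combination hd' - hc'
      rw [r1] at s1
      rw [r2] at s2
      have : a.val = 0 := by omega
      rw [ZMod.val_eq_zero] at this
      rw [← ha', this, add_zero]
    subst hpq
    rw [Finset.map_inj] at e1 e2
    rw [e1, e2]
  rw [← Set.InjOn.ncard_image hinj]
  congr 1
  ext ⟨Iu, Iv⟩
  simp only [Set.mem_ofPred_eq, semi_iff, Set.mem_image]
  constructor
  · rintro ⟨⟨-, p, hp, h⟩, hcu, hcv⟩
    refine ⟨⟨p, Iu.map (Equiv.addLeft (-p)).toEmbedding, Iv.map (Equiv.addLeft (-p)).toEmbedding⟩,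
      ⟨Set.mem_univ _, ?_, ?_, ?_, ?_⟩, ?_⟩
    · simp [hp]
    · intro x hx y hy
      simp only [Finset.mem_map, Equiv.coe_toEmbedding, Equiv.coe_addLeft] at hx hy
      obtain ⟨x, hx, rfl⟩ := hx
      obtain ⟨y, hy, rfl⟩ := hy
      have := h x hx y hy
      rwa [neg_add_eq_sub, neg_add_eq_sub]
    · simpa using hcu
    · simpa using hcv
    · simp only [f, Prod.mk.injEq]
      constructor <;> · ext x; simp
  · rintro ⟨⟨p, A, B⟩, ⟨-, h0, hle, hA, hB⟩, heq⟩
    simp only at h0 hle hA hB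
    simp only [f, Prod.mk.injEq] at heq
    obtain ⟨rfl, rfl⟩ := heq
    refine ⟨⟨?_, p, ?_, ?_⟩, by simpa using hA, by simpa using hB⟩
    · rw [Finset.map_nonempty]; exact Finset.card_pos.1 (by omega)
    · simp [h0]
    · intro x hx y hy
      simp only [Finset.mem_map, Equiv.coe_toEmbedding, Equiv.coe_addLeft] at hx hy
      obtain ⟨x, hx, rfl⟩ := hx
      obtain ⟨y, hy, rfl⟩ := hy
      simpa using hle x hx y hy

lemma exists_initial (u : ℕ) : ∀ S : Finset ℕ, u ≤ S.card →
    ∃ A ⊆ S, A.card = u ∧ ∀ a ∈ A, ∀ b ∈ S \ A, a < b := by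
  induction u with
  | zero => intro S _; exact ⟨∅, by simp, by simp, by simp⟩
  | succ k ih =>
    intro S hS
    obtain ⟨A, hAS, hA, hlt⟩ := ih S (by omega)
    have hne : (S \ A).Nonempty := by
      rw [← Finset.card_pos, Finset.card_sdiff_of_subset hAS]; omega
    obtain ⟨c, hc, hmin⟩ := Finset.exists_min_image (S \ A) id hne
    have hc' := Finset.mem_sdiff.1 hc
    refine ⟨insert c A, ?_, ?_, ?_⟩
    · exact Finset.insert_subset hc'.1 hAS
    · rw [Finset.card_insert_of_notMem hc'.2, hA]
    · intro a ha b hb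
      simp only [Finset.mem_insert, Finset.mem_sdiff, not_or] at ha hb
      have hb' : b ∈ S \ A := Finset.mem_sdiff.2 ⟨hb.1, hb.2.2⟩
      rcases ha with rfl | ha
      · have := hmin b hb'
        simp only [id] at this
        omega
      · exact hlt a ha b hb'

lemma initial_subset {A B C D : Finset ℕ} (h : A ∪ B = C ∪ D) (hc : A.card = C.card)
    (h1 : ∀ a ∈ A, ∀ b ∈ B, a < b) (h2 : ∀ a ∈ C, ∀ b ∈ D, a < b) : A = C := by
  apply Finset.eq_of_subset_of_card_le _ hc.ge
  intro a ha
  by_contra hac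
  have : ∃ c ∈ C, c ∉ A := by
    by_contra! hcon
    have := Finset.eq_of_subset_of_card_le hcon hc.le
    rw [this] at hac
    exact hac ha
  obtain ⟨c, hcC, hcA⟩ := this
  have haD : a ∈ D := by
    have : a ∈ C ∪ D := h ▸ Finset.mem_union_left _ ha
    simpa [hac] using this
  have hcB : c ∈ B := by
    have : c ∈ A ∪ B := h ▸ Finset.mem_union_left _ hcC
    simpa [hcA] using this
  have := h1 a ha c hcB
  have := h2 c hcC a haD
  omega

lemma normPairs_ncard (m u v : ℕ) [NeZero m] (hu : 1 ≤ u) (hv : 1 ≤ v) :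
    (normPairs m u v).ncard = (baseSets m (u + v)).ncard := by
  let g : ZMod m ↪ ℕ := ⟨ZMod.val, ZMod.val_injective m⟩
  let g' : ZMod m ↪ ℕ := ⟨fun x => x.val + 1, fun x y h => ZMod.val_injective m (by simpa using h)⟩
  let f : Finset (ZMod m) × Finset (ZMod m) → Finset ℕ := fun p => p.1.map g ∪ p.2.map g'
  have key : ∀ A B : Finset (ZMod m), (∀ x ∈ A, ∀ y ∈ B, x.val ≤ y.val) →
      ∀ a ∈ A.map g, ∀ b ∈ B.map g', a < b := by
    intro A B h a ha b hb
    obtain ⟨x, hx, rfl⟩ := Finset.mem_map.1 ha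
    obtain ⟨y, hy, rfl⟩ := Finset.mem_map.1 hb
    exact Nat.lt_succ_of_le (h x hx y hy)
  have disj : ∀ A B : Finset ℕ, (∀ a ∈ A, ∀ b ∈ B, a < b) → Disjoint A B := by
    intro A B h
    rw [Finset.disjoint_left]
    intro a ha hb
    exact lt_irrefl _ (h a ha a hb)
  have hinj : Set.InjOn f (normPairs m u v) := by
    rintro ⟨A, B⟩ ⟨h0, hle, hA, hB⟩ ⟨C, D⟩ ⟨h0', hle', hC, hD⟩ heq
    simp only at h0 hle hA hB h0' hle' hC hD
    simp only [f] at heq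
    have k1 := key A B hle
    have k2 := key C D hle'
    have e := initial_subset heq (by simp [hA, hC]) k1 k2
    have e' : B.map g' = D.map g' := by
      rw [← Finset.union_sdiff_cancel_left (disj _ _ k1), heq, e,
        Finset.union_sdiff_cancel_left (disj _ _ k2)]
    rw [Finset.map_inj] at e e'
    rw [e, e']
  rw [← Set.InjOn.ncard_image hinj]
  congr 1
  ext S
  constructor
  · rintro ⟨⟨A, B⟩, ⟨h0, hle, hA, hB⟩, rfl⟩
    simp only at h0 hle hA hB
    refine ⟨?_, ?_, ?_⟩
    · exact Finset.mem_union_left _ (Finset.mem_map.2 ⟨0, h0, ZMod.val_zero⟩)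
    · intro x hx
      rw [Finset.mem_range]
      rcases Finset.mem_union.1 hx with hx | hx
      · obtain ⟨x, -, rfl⟩ := Finset.mem_map.1 hx
        exact (ZMod.val_lt x).trans (Nat.lt_succ_self m)
      · obtain ⟨x, -, rfl⟩ := Finset.mem_map.1 hx
        exact Nat.succ_lt_succ (ZMod.val_lt x)
    · simp only [f]
      rw [Finset.card_union_of_disjoint (disj _ _ (key A B hle)), Finset.card_map,
        Finset.card_map, hA, hB]
  · rintro ⟨h0, hS, hc⟩
    obtain ⟨A0, hAS, hA, hlt⟩ := exists_initial u S (by omega)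
    have hBc : (S \ A0).card = v := by
      rw [Finset.card_sdiff_of_subset hAS]; omega
    obtain ⟨b, hb⟩ : (S \ A0).Nonempty := Finset.card_pos.1 (by omega)
    obtain ⟨a, ha⟩ : A0.Nonempty := Finset.card_pos.1 (by omega)
    have h0A : 0 ∈ A0 := by
      by_contra hc0
      have := hlt a ha 0 (Finset.mem_sdiff.2 ⟨h0, hc0⟩)
      omega
    have e1 : (Finset.univ.filter fun x : ZMod m => x.val ∈ A0).map g = A0 := by
      ext n
      simp only [Finset.mem_map, Finset.mem_filter, Finset.mem_univ, true_and]
      constructor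
      · rintro ⟨x, hx, rfl⟩
        exact hx
      · intro hn
        have h1 := hlt n hn b hb
        have h2 := Finset.mem_range.1 (hS (Finset.mem_sdiff.1 hb).1)
        have h3 : (n : ZMod m).val = n := ZMod.val_natCast_of_lt (by omega)
        exact ⟨n, by rwa [h3], h3⟩
    have e2 : (Finset.univ.filter fun x : ZMod m => x.val + 1 ∈ S \ A0).map g' = S \ A0 := by
      ext n
      simp only [Finset.mem_map, Finset.mem_filter, Finset.mem_univ, true_and]
      constructor
      · rintro ⟨x, hx, rfl⟩
        exact hx
      · intro hn
        have h1 := hlt 0 h0A n hn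
        have h2 := Finset.mem_range.1 (hS (Finset.mem_sdiff.1 hn).1)
        have h3 : ((n - 1 : ℕ) : ZMod m).val + 1 = n := by
          rw [ZMod.val_natCast_of_lt (by omega)]
          omega
        exact ⟨((n - 1 : ℕ) : ZMod m), by rwa [h3], h3⟩
    refine ⟨⟨Finset.univ.filter fun x : ZMod m => x.val ∈ A0,
      Finset.univ.filter fun x : ZMod m => x.val + 1 ∈ S \ A0⟩, ⟨?_, ?_, ?_, ?_⟩, ?_⟩
    · simp [h0A]
    · intro x hx y hy
      have hx' := (Finset.mem_filter.1 hx).2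
      have hy' := (Finset.mem_filter.1 hy).2
      have := hlt _ hx' _ hy'
      omega
    · simp only
      rw [← Finset.card_map g, e1, hA]
    · simp only
      rw [← Finset.card_map g', e2, hBc]
    · simp only [f]
      rw [e1, e2, Finset.union_sdiff_of_subset hAS]

/-- Symmetry of the semi-mixed counts: for `u, v ≥ 2`, `C_{u,v}(m) = C_{u+1,v−1}(m)`. -/
theorem semiMixedCount_symm (m u v : ℕ) (hm : 1 ≤ m) (hu : 2 ≤ u) (hv : 2 ≤ v) :
    semiMixedCount m u v = semiMixedCount m (u + 1) (v - 1) := by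
  have : NeZero m := ⟨by omega⟩
  rw [count_eq_prod m u v (by omega), count_eq_prod m (u + 1) (v - 1) (by omega),
    Set.ncard_prod, Set.ncard_prod, normPairs_ncard m u v (by omega) (by omega),
    normPairs_ncard m (u + 1) (v - 1) (by omega) (by omega)]
  congr 3
  omega
end

section
/- Fix an integer m ≥ 2. Then the signed count of all semi-mixed support pairs in ℤ/mℤ vanishes: ∑_{(I_u, I_v) semi-mixed} (−1)^{|I_u| + |I_v|} = 0; equivalently, ∑_{u ≥ 1, v ≥ 1} (−1)^{u+v}·C_{u,v}(m) = 0, where C_{u,v}(m) is the number of semi-mixed support pairs with |I_u| = u and |I_v| = v. -/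
open Classical in
/-- `Q x A B`: `x` is the last element of the `A`-block, followed cyclically by `B \ {x}`. -/
def SMQ (m : ℕ) (x : ZMod m) (A B : Finset (ZMod m)) : Prop :=
  x ∈ A ∧ B.Nonempty ∧ ∀ b ∈ B, b ≠ x → ∀ a ∈ A, (b - x - 1).val < (a - x - 1).val

lemma sm_shift (m : ℕ) [NeZero m] (i x y : ZMod m) :
    (y - x - 1).val + (x - i).val + 1 = (y - i).val ∨
      (y - x - 1).val + (x - i).val + 1 = (y - i).val + m := by
  have h1 := ZMod.val_lt (y - x - 1)
  have h2 := ZMod.val_lt (x - i)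
  have h3 := ZMod.val_lt (y - i)
  have h : (((y - x - 1).val + (x - i).val + 1 : ℕ) : ZMod m) = ((y - i).val : ℕ) := by
    push_cast
    simp only [ZMod.natCast_val, ZMod.cast_id', id]
    ring
  rw [ZMod.natCast_eq_natCast_iff', Nat.mod_eq_of_lt h3] at h
  have h4 := Nat.div_add_mod ((y - x - 1).val + (x - i).val + 1) m
  rw [h] at h4
  have h5 : ((y - x - 1).val + (x - i).val + 1) / m < 2 := by
    rw [Nat.div_lt_iff_lt_mul (Nat.pos_of_ne_zero (NeZero.ne m))]; omega
  interval_cases ((y - x - 1).val + (x - i).val + 1) / m <;> omega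

lemma sm_val_zero {m : ℕ} [NeZero m] {i y : ZMod m} (h : (y - i).val = 0) : y = i := by
  rw [ZMod.val_eq_zero] at h
  exact sub_eq_zero.mp h

lemma sm_val_inj {m : ℕ} [NeZero m] {i x y : ZMod m} (h : (y - i).val = (x - i).val) : y = x := by
  have := ZMod.val_injective m h
  exact sub_left_injective this

lemma sm_mem_arc (m : ℕ) [NeZero m] (i y : ZMod m) (l : ℕ) :
    y ∈ Arc m i l ↔ (y - i).val ≤ l := by
  unfold Arc
  simp only [Finset.mem_image, Finset.mem_range]
  constructor
  · rintro ⟨t, ht, rfl⟩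
    rw [add_sub_cancel_left, ZMod.val_natCast]
    exact (Nat.mod_le _ _).trans (by omega)
  · intro h
    exact ⟨(y - i).val, by omega, by simp⟩

lemma sm_iff (m : ℕ) [NeZero m] (A B : Finset (ZMod m)) :
    IsSemiMixedPair m A B ↔ A.Nonempty ∧ B.Nonempty ∧ ∃ (i : ZMod m) (l : ℕ),
      l ≤ m - 1 ∧ (∀ a ∈ A, (a - i).val ≤ l) ∧ ∀ b ∈ B, l ≤ (b - i).val := by
  unfold IsSemiMixedPair
  refine and_congr_right fun _ => and_congr_right fun _ => exists_congr fun i =>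
    exists_congr fun l => and_congr_right fun _ => and_congr ?_ ?_
  · simp only [Finset.subset_iff, sm_mem_arc]
  · split_ifs with h
    · simp [h]
    · rw [← Finset.disjoint_iff_inter_eq_empty, Finset.disjoint_left]
      refine forall_congr' fun b => forall_congr' fun _ => ?_
      rw [sm_mem_arc]
      omega

lemma sm_unique (m : ℕ) [NeZero m] (A B : Finset (ZMod m)) (x x' : ZMod m)
    (h : SMQ m x A B) (h' : SMQ m x' A B) : x = x' := by
  by_contra hne
  obtain ⟨hx, ⟨b, hb⟩, hQ⟩ := h
  obtain ⟨hx', -, hQ'⟩ := h'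
  by_cases h1 : b = x
  · subst h1
    exact absurd (hQ' b hb hne b hx) (lt_irrefl _)
  by_cases h2 : b = x'
  · subst h2
    exact absurd (hQ b hb h1 b hx') (lt_irrefl _)
  have e1 := hQ b hb h1 x' hx'
  have e2 := hQ' b hb h2 x hx
  have s1 := sm_shift m x x b
  have s2 := sm_shift m x x x'
  have s3 := sm_shift m x x' b
  have s4 := sm_shift m x x' x
  have z : (x - x).val = 0 := by simp
  have n1 : (b - x).val ≠ 0 := fun h => h1 (sm_val_zero h)
  have n2 : (x' - x).val ≠ 0 := fun h => hne (sm_val_zero h).symm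
  have l1 := ZMod.val_lt (b - x - 1)
  have l2 := ZMod.val_lt (x' - x - 1)
  have l3 := ZMod.val_lt (b - x' - 1)
  have l4 := ZMod.val_lt (x - x' - 1)
  omega

lemma sm_exists (m : ℕ) [NeZero m] (A B : Finset (ZMod m)) :
    IsSemiMixedPair m A B ↔ ∃ x, SMQ m x A B := by
  rw [sm_iff]
  constructor
  · rintro ⟨hA, hB, i, l, hl, h1, h2⟩
    obtain ⟨x, hx, hmax⟩ := A.exists_max_image (fun y => (y - i).val) hA
    refine ⟨x, hx, hB, fun b hb hbx a ha => ?_⟩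
    have := hmax a ha
    have := h1 x hx
    have := h2 b hb
    have s1 := sm_shift m i x a
    have s2 := sm_shift m i x b
    have n1 : (b - i).val ≠ (x - i).val := fun h => hbx (sm_val_inj h)
    have l1 := ZMod.val_lt (a - i)
    have l2 := ZMod.val_lt (b - i)
    have l3 := ZMod.val_lt (a - x - 1)
    have l4 := ZMod.val_lt (b - x - 1)
    omega
  · rintro ⟨x, hx, hB, hQ⟩
    obtain ⟨i, hi, hmin⟩ := A.exists_min_image (fun y => (y - x - 1).val) ⟨x, hx⟩
    refine ⟨⟨x, hx⟩, hB, i, (x - i).val, ?_, ?_, ?_⟩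
    · have := ZMod.val_lt (x - i)
      omega
    · intro a ha
      have := hmin a ha
      have s1 := sm_shift m i x a
      have s2 := sm_shift m i x i
      have z : (i - i).val = 0 := by simp
      have l1 := ZMod.val_lt (a - x - 1)
      have l2 := ZMod.val_lt (a - i)
      omega
    · intro b hb
      by_cases hbx : b = x
      · rw [hbx]
      have := hQ b hb hbx i hi
      have s1 := sm_shift m i x b
      have s2 := sm_shift m i x i
      have z : (i - i).val = 0 := by simp
      have l1 := ZMod.val_lt (b - x - 1)
      have l2 := ZMod.val_lt (b - i)
      omega

/-- toggle an element -/
def smTog {m : ℕ} (x : ZMod m) (B : Finset (ZMod m)) : Finset (ZMod m) :=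
  if x ∈ B then B.erase x else insert x B

lemma smTog_tog {m : ℕ} (x : ZMod m) (B : Finset (ZMod m)) : smTog x (smTog x B) = B := by
  unfold smTog
  by_cases h : x ∈ B <;> simp [h]

lemma mem_smTog {m : ℕ} (x y : ZMod m) (B : Finset (ZMod m)) (h : y ≠ x) :
    y ∈ smTog x B ↔ y ∈ B := by
  unfold smTog
  by_cases hx : x ∈ B <;> simp [hx, h]

lemma smTog_ne {m : ℕ} (x : ZMod m) (B : Finset (ZMod m)) : smTog x B ≠ B := by
  unfold smTog
  by_cases hx : x ∈ B <;> simp [hx]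

lemma smTog_sign {m : ℕ} (x : ZMod m) (B : Finset (ZMod m)) :
    (-1 : ℤ) ^ (smTog x B).card = - (-1 : ℤ) ^ B.card := by
  unfold smTog
  by_cases hx : x ∈ B
  · rw [if_pos hx, ← Finset.card_erase_add_one hx, pow_succ]; ring
  · rw [if_neg hx, Finset.card_insert_of_notMem hx, pow_succ]; ring

open Classical in
lemma sm_sum_x (m : ℕ) [NeZero m] (hm : 2 ≤ m) (x : ZMod m) :
    ∑ p : Finset (ZMod m) × Finset (ZMod m) with SMQ m x p.1 p.2,
      (-1 : ℤ) ^ (p.1.card + p.2.card) = 0 := by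
  have : Fact (1 < m) := ⟨hm⟩
  have hx1 : x ≠ x + 1 := by simp
  refine Finset.sum_involution
    (fun p _ => if p.2 = {x} then (smTog (x + 1) p.1, p.2) else (p.1, smTog x p.2)) ?_ ?_ ?_ ?_
  · rintro ⟨A, B⟩ -
    dsimp only
    split_ifs with h <;> simp only [pow_add, smTog_sign] <;> ring
  · rintro ⟨A, B⟩ - -
    dsimp only
    split_ifs with h <;> simp [smTog_ne]
  · rintro ⟨A, B⟩ hp
    simp only [Finset.mem_filter, Finset.mem_univ, true_and] at hp ⊢
    obtain ⟨hx, hB, hQ⟩ := hp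
    split_ifs with h
    · subst h
      refine ⟨(mem_smTog _ _ _ hx1).2 hx, hB, fun b hb hbx => absurd (by simpa using hb) hbx⟩
    · refine ⟨hx, ?_, fun b hb hbx => hQ b ((mem_smTog _ _ _ hbx).1 hb) hbx⟩
      obtain ⟨b, hb, hbx⟩ : ∃ b ∈ B, b ≠ x := by
        by_contra! hc
        exact h (Finset.eq_singleton_iff_nonempty_unique_mem.2 ⟨hB, hc⟩)
      exact ⟨b, (mem_smTog _ _ _ hbx).2 hb⟩
  · rintro ⟨A, B⟩ hp
    simp only [Finset.mem_filter, Finset.mem_univ, true_and] at hp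
    obtain ⟨hx, hB, hQ⟩ := hp
    dsimp only
    by_cases h : B = {x}
    · simp [h, smTog_tog]
    · have h' : smTog x B ≠ {x} := by
        intro hc
        have := congrArg (smTog x) hc
        rw [smTog_tog] at this
        simp [smTog] at this
        exact hB.ne_empty this
      simp [h, h', smTog_tog]

open Classical in
lemma sm_sum (m : ℕ) [NeZero m] (hm : 2 ≤ m) :
    ∑ p : Finset (ZMod m) × Finset (ZMod m) with IsSemiMixedPair m p.1 p.2,
      (-1 : ℤ) ^ (p.1.card + p.2.card) = 0 := by
  have h : (Finset.univ.filter fun p : Finset (ZMod m) × Finset (ZMod m) =>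
      IsSemiMixedPair m p.1 p.2) =
      (Finset.univ : Finset (ZMod m)).biUnion fun x => Finset.univ.filter fun p => 
        SMQ m x p.1 p.2 := by
    ext p
    simp [sm_exists]
  rw [h, Finset.sum_biUnion]
  · exact Finset.sum_eq_zero fun x _ => sm_sum_x m hm x
  · intro x _ y _ hxy
    refine Finset.disjoint_left.2 fun p hp hp' => hxy ?_
    simp only [Finset.mem_filter, Finset.mem_univ, true_and] at hp hp'
    exact sm_unique m _ _ _ _ hp hp'

open Classical in
lemma sm_count (m : ℕ) [NeZero m] (u v : ℕ) : semiMixedCount m u v =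
    (Finset.univ.filter fun p : Finset (ZMod m) × Finset (ZMod m) =>
      IsSemiMixedPair m p.1 p.2 ∧ p.1.card = u ∧ p.2.card = v).card := by
  unfold semiMixedCount
  rw [← Set.ncard_coe_finset]
  simp

lemma sm_count_zero (m : ℕ) [NeZero m] (u v : ℕ)
    (h : ¬ ((1 ≤ u ∧ u < m + 1) ∧ (1 ≤ v ∧ v < m + 1))) : semiMixedCount m u v = 0 := by
  classical
  rw [sm_count, Finset.card_eq_zero, Finset.filter_eq_empty_iff]
  rintro ⟨A, B⟩ - ⟨⟨hA, hB, -⟩, rfl, rfl⟩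
  apply h
  have h1 := Finset.card_le_univ A
  have h2 := Finset.card_le_univ B
  rw [ZMod.card] at h1 h2
  have h3 := hA.card_pos
  have h4 := hB.card_pos
  dsimp only at h1 h2 h3 h4 ⊢
  omega

lemma sm_finsum (n : ℕ) (f : ℕ → ℤ) (hf : ∀ u, ¬ (1 ≤ u ∧ u < n + 1) → f u = 0) :
    ∑ᶠ u ∈ {u : ℕ | 1 ≤ u}, f u = ∑ u ∈ Finset.range (n + 1), f u := by
  rw [← finsum_mem_coe_finset]
  apply finsum_mem_inter_support_eq'
  intro u hu
  have : 1 ≤ u ∧ u < n + 1 := by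
    by_contra hc
    exact hu (hf u hc)
  simp [this.1]
  omega

/-- For `m ≥ 2`, the signed count of all semi-mixed support pairs in `ℤ/mℤ` vanishes:
`∑_{(I_u, I_v) semi-mixed} (−1)^{|I_u| + |I_v|} = 0`; equivalently,
`∑_{u ≥ 1, v ≥ 1} (−1)^{u+v}·C_{u,v}(m) = 0`. -/
theorem semiMixed_signed_count_eq_zero (m : ℕ) (hm : 2 ≤ m) :
    (∑ᶠ p ∈ {p : Finset (ZMod m) × Finset (ZMod m) | IsSemiMixedPair m p.1 p.2},
      (-1 : ℤ) ^ (p.1.card + p.2.card) = 0) ∧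
    (∑ᶠ u ∈ {u : ℕ | 1 ≤ u}, ∑ᶠ v ∈ {v : ℕ | 1 ≤ v},
      (-1 : ℤ) ^ (u + v) * (semiMixedCount m u v : ℤ) = 0) := by
  classical
  have : NeZero m := ⟨by omega⟩
  have key := sm_sum m hm
  constructor
  · rw [← key, ← finsum_mem_coe_finset]
    simp
  · have inner : ∀ u, ∑ᶠ v ∈ {v : ℕ | 1 ≤ v}, (-1 : ℤ) ^ (u + v) * (semiMixedCount m u v : ℤ) =
        ∑ v ∈ Finset.range (m + 1), (-1 : ℤ) ^ (u + v) * (semiMixedCount m u v : ℤ) := by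
      intro u
      apply sm_finsum
      intro v hv
      rw [sm_count_zero m u v (fun h => hv h.2)]
      simp
    simp only [inner]
    rw [sm_finsum m]
    · rw [← key, ← Finset.sum_product',
        ← Finset.sum_fiberwise_of_maps_to
          (t := Finset.range (m + 1) ×ˢ Finset.range (m + 1))
          (g := fun p : Finset (ZMod m) × Finset (ZMod m) => (p.1.card, p.2.card))]
      · refine Finset.sum_congr rfl ?_
        rintro ⟨u, v⟩ -
        rw [Finset.filter_filter, sm_count]
        simp only [Prod.mk.injEq]
        rw [Finset.sum_congr rfl (g := fun _ => (-1 : ℤ) ^ (u + v))]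
        · rw [Finset.sum_const, nsmul_eq_mul, mul_comm]
        · intro p hp
          simp only [Finset.mem_filter, Finset.mem_univ, true_and] at hp
          rw [hp.2.1, hp.2.2]
      · rintro ⟨A, B⟩ -
        have h1 := Finset.card_le_univ A
        have h2 := Finset.card_le_univ B
        rw [ZMod.card] at h1 h2
        simp only [Finset.mem_product, Finset.mem_range]
        omega
    · intro u hu
      refine Finset.sum_eq_zero fun v _ => ?_
      rw [sm_count_zero m u v (fun h => hu h.1)]
      simp
end
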